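/- Let ε and b satisfy 0 < ε ≤ 1, 0 < b, and bε ≤ 1/2, and let u = (0, 0, aε) and c = (0, bε, 0). Then there exists ξ̃ with 0 < ξ̃ < ξ₀ such that d_g(u, c) = bε √((1 + ξ̃)² a²/b² + 1). -/

import Mathlib

open Real MeasureTheory

noncomputable section

/-- `ℝ³` with the Euclidean norm. -/
abbrev E3 : Type := EuclideanSpace ℝ (Fin 3)

/-- The bump function `f(y) = A (1 + cos (π y))`. -/
def f (A y : ℝ) : ℝ := A * (1 + Real.cos (Real.pi * y))

/-- The g-length of a path `γ` in the perturbed metric: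
`L_g(γ) = ∫₀¹ √(γ₁′(t)² + γ₂′(t)² + (1 + f(γ₂(t))) γ₃′(t)²) dt`. -/
def Lg (A : ℝ) (γ : ℝ → E3) : ℝ :=
  ∫ t in (0:ℝ)..1,
    Real.sqrt ((deriv γ t 0) ^ 2 + (deriv γ t 1) ^ 2
      + (1 + f A (γ t 1)) * (deriv γ t 2) ^ 2)

/-- The geodesic distance: the infimum of g-lengths of C¹ paths from `p` to `q`. -/
def dg (A : ℝ) (p q : E3) : ℝ :=
  sInf {L : ℝ | ∃ γ : ℝ → E3,
    ContDiff ℝ 1 γ ∧ γ 0 = p ∧ γ 1 = q ∧ L = Lg A γ}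

/-- A point of `ℝ³` from its three coordinates. -/
def pt (x y z : ℝ) : E3 := (EuclideanSpace.equiv (Fin 3) ℝ).symm ![x, y, z]

/-- `a = 1/√2`. -/
def a : ℝ := 1 / Real.sqrt 2

/-- `ξ₀ = √(1 + f(0)) − 1`. -/
def ξ₀ (A : ℝ) : ℝ := Real.sqrt (1 + f A 0) - 1

lemma f_le (A y : ℝ) (hA0 : 0 < A) : f A y ≤ 2 * A := by
  unfold f; nlinarith [Real.cos_le_one (Real.pi * y)]

lemma f_nonneg' (A y : ℝ) (hA0 : 0 < A) : 0 ≤ f A y := by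
  unfold f
  exact mul_nonneg hA0.le (by linarith [Real.neg_one_le_cos (Real.pi * y)])

lemma cs_bound (A c q δ s y z x : ℝ) (hA0 : 0 < A) (hA : A ≤ 3 / 8) (hc0 : 0 ≤ c)
    (hcq : c ^ 2 + q ^ 2 = 1) (hδ : δ = q ^ 2 * A / 8) (hs0 : 0 ≤ s) (hs2 : s ≤ 2) :
    (c + δ * s) * y - q * z ≤ Real.sqrt (x ^ 2 + y ^ 2 + (1 + A * s) * z ^ 2) := by
  apply Real.le_sqrt_of_sq_le
  have hc1 : c ≤ 1 := by nlinarith [sq_nonneg q]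
  have hq1 : q ^ 2 ≤ 1 := by nlinarith [sq_nonneg c]
  have hδ0 : 0 ≤ δ := by rw [hδ]; positivity
  have hδ1 : δ ≤ 1 := by rw [hδ]; nlinarith
  set w := 1 + A * s with hw
  have hw1 : 1 ≤ w := by rw [hw]; nlinarith [mul_nonneg hA0.le hs0]
  have hw2 : w ≤ 2 := by rw [hw]; nlinarith
  set u := c + δ * s with hu
  -- `u ^ 2 * w + q ^ 2 ≤ w`
  have h1 : u ^ 2 ≤ c ^ 2 + 4 * δ * s := by
    rw [hu]
    have e1 : c * (δ * s) ≤ 1 * (δ * s) := mul_le_mul_of_nonneg_right hc1 (mul_nonneg hδ0 hs0)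
    have e2 : (δ * s) * (δ * s) ≤ 2 * (δ * s) :=
      mul_le_mul_of_nonneg_right (by nlinarith) (mul_nonneg hδ0 hs0)
    nlinarith
  have h2 : 4 * δ * s * w ≤ q ^ 2 * A * s := by
    have : 0 ≤ q ^ 2 * A * s := by positivity
    rw [hδ]; nlinarith
  have h3 : u ^ 2 * w + q ^ 2 ≤ w := by
    have : u ^ 2 * w ≤ (c ^ 2 + 4 * δ * s) * w := mul_le_mul_of_nonneg_right h1 (by linarith)
    have hc : c ^ 2 = 1 - q ^ 2 := by linarith
    rw [hc] at this
    have : q ^ 2 * w = q ^ 2 + q ^ 2 * A * s := by rw [hw]; ring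
    nlinarith
  have h4 : (u * y - q * z) ^ 2 * w ≤ (y ^ 2 + w * z ^ 2) * w := by
    have e : (u * y - q * z) ^ 2 * w
        = (u ^ 2 * w + q ^ 2) * (y ^ 2 + w * z ^ 2) - (u * w * z + q * y) ^ 2 := by ring
    have : (u ^ 2 * w + q ^ 2) * (y ^ 2 + w * z ^ 2) ≤ w * (y ^ 2 + w * z ^ 2) :=
      mul_le_mul_of_nonneg_right h3 (by positivity)
    nlinarith [sq_nonneg (u * w * z + q * y)]
  have h5 := le_of_mul_le_mul_right h4 (by linarith)
  nlinarith [sq_nonneg x]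

lemma coord_deriv (γ : ℝ → E3) (hγ : ContDiff ℝ 1 γ) (i : Fin 3) (t : ℝ) :
    HasDerivAt (fun t => γ t i) (deriv γ t i) t := by
  have h := ((hγ.differentiable (by norm_num)) t).hasDerivAt
  exact (EuclideanSpace.proj (𝕜 := ℝ) i).hasFDerivAt.comp_hasDerivAt t h

lemma coord_cont (γ : ℝ → E3) (hγ : ContDiff ℝ 1 γ) (i : Fin 3) :
    Continuous (fun t => deriv γ t i) :=
  (EuclideanSpace.proj (𝕜 := ℝ) i).continuous.comp (hγ.continuous_deriv le_rfl)

lemma integrand_cont (A : ℝ) (γ : ℝ → E3) (hγ : ContDiff ℝ 1 γ) :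
    Continuous (fun t => Real.sqrt ((deriv γ t 0) ^ 2 + (deriv γ t 1) ^ 2
      + (1 + f A (γ t 1)) * (deriv γ t 2) ^ 2)) := by
  have h0 := coord_cont γ hγ 0
  have h1 := coord_cont γ hγ 1
  have h2 := coord_cont γ hγ 2
  have h3 : Continuous (fun t => γ t 1) :=
    (EuclideanSpace.proj (𝕜 := ℝ) (1 : Fin 3)).continuous.comp hγ.continuous
  unfold f
  fun_prop

lemma Lg_lower (A c q δ B H : ℝ) (hA0 : 0 < A) (hA : A ≤ 3 / 8) (hc0 : 0 ≤ c)
    (hcq : c ^ 2 + q ^ 2 = 1) (hδ : δ = q ^ 2 * A / 8) (hB0 : 0 < B) (hB : B ≤ 1 / 2)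
    (γ : ℝ → E3) (hγ : ContDiff ℝ 1 γ) (h0 : γ 0 = pt 0 0 H) (h1 : γ 1 = pt 0 B 0) :
    c * B + q * H + δ * B ≤ Lg A γ := by
  have hd : ∀ t ∈ Set.uIcc (0:ℝ) 1, HasDerivAt
      (fun t => c * γ t 1 + δ * (γ t 1 + Real.sin (Real.pi * γ t 1) / Real.pi) - q * γ t 2)
      ((c + δ * (1 + Real.cos (Real.pi * γ t 1))) * deriv γ t 1 - q * deriv γ t 2) t := by
    intro t _
    have e1 := coord_deriv γ hγ 1 t
    have e2 := coord_deriv γ hγ 2 t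
    have := ((e1.const_mul c).add
      ((e1.add (((e1.const_mul Real.pi).sin).div_const Real.pi)).const_mul δ)).sub (e2.const_mul q)
    refine this.congr_deriv ?_
    have hpi := Real.pi_ne_zero
    field_simp
  have hcont : Continuous (fun t => (c + δ * (1 + Real.cos (Real.pi * γ t 1))) * deriv γ t 1
      - q * deriv γ t 2) := by
    have h1 := coord_cont γ hγ 1
    have h2 := coord_cont γ hγ 2
    have h3 : Continuous (fun t => γ t 1) :=
      (EuclideanSpace.proj (𝕜 := ℝ) (1 : Fin 3)).continuous.comp hγ.continuous
    fun_prop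
  have hF := intervalIntegral.integral_eq_sub_of_hasDerivAt hd (hcont.intervalIntegrable 0 1)
  have hle : (∫ t in (0:ℝ)..1, ((c + δ * (1 + Real.cos (Real.pi * γ t 1))) * deriv γ t 1
      - q * deriv γ t 2)) ≤ Lg A γ := by
    unfold Lg
    refine intervalIntegral.integral_mono_on zero_le_one
      (hcont.intervalIntegrable 0 1)
      ((integrand_cont A γ hγ).intervalIntegrable 0 1) ?_
    intro t _
    unfold f
    exact cs_bound A c q δ (1 + Real.cos (Real.pi * γ t 1)) (deriv γ t 1) (deriv γ t 2)
        (deriv γ t 0) hA0 hA hc0 hcq hδ (by linarith [Real.neg_one_le_cos (Real.pi * γ t 1)])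
        (by linarith [Real.cos_le_one (Real.pi * γ t 1)])
  rw [hF, h0, h1] at hle
  refine le_trans ?_ hle
  have hs : 0 ≤ Real.sin (Real.pi * B) / Real.pi :=
    div_nonneg (Real.sin_nonneg_of_nonneg_of_le_pi (by positivity)
      (by nlinarith [Real.pi_pos])) Real.pi_pos.le
  have hδ0 : 0 ≤ δ := by rw [hδ]; positivity
  simp [pt]
  nlinarith [mul_nonneg hδ0 hs]

lemma line_upper (A B H : ℝ) (hA0 : 0 < A) (hB0 : 0 < B) (hB : B ≤ 1 / 2) (hH : 0 < H) :
    ∃ γ : ℝ → E3, ContDiff ℝ 1 γ ∧ γ 0 = pt 0 0 H ∧ γ 1 = pt 0 B 0 ∧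
      Lg A γ < Real.sqrt (B ^ 2 + (1 + f A 0) * H ^ 2) := by
  let γ : ℝ → E3 := fun t => pt 0 0 H + t • (pt 0 B 0 - pt 0 0 H)
  have hd : ∀ t, deriv γ t = pt 0 B 0 - pt 0 0 H := by
    intro t
    have := ((hasDerivAt_id t).smul_const (pt 0 B 0 - pt 0 0 H)).const_add (pt 0 0 H)
    rw [one_smul] at this
    exact this.deriv
  have hγ : ContDiff ℝ 1 γ := by
    show ContDiff ℝ 1 (fun t : ℝ => pt 0 0 H + t • (pt 0 B 0 - pt 0 0 H))
    fun_prop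
  refine ⟨γ, hγ, by simp [γ], by simp [γ], ?_⟩
  have hc := integrand_cont A γ hγ
  have hlt := intervalIntegral.integral_lt_integral_of_continuousOn_of_le_of_exists_lt
    (zero_lt_one (α := ℝ)) hc.continuousOn
    (continuousOn_const (c := Real.sqrt (B ^ 2 + (1 + f A 0) * H ^ 2)))
    (fun t _ => by
      apply Real.sqrt_le_sqrt
      have := f_le A (γ t 1) hA0
      have e : f A 0 = 2 * A := by simp [f]; ring
      rw [hd, e]
      simp only [pt, PiLp.sub_apply]
      simp
      nlinarith [sq_nonneg H])
    ⟨1, by simp, by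
      have hB1 : f A (γ 1 1) < 2 * A := by
        have e : γ 1 1 = B := by simp [γ, pt]
        rw [e]; unfold f
        have : Real.cos (Real.pi * B) < 1 := by
          rw [← Real.cos_zero]
          exact Real.cos_lt_cos_of_nonneg_of_le_pi le_rfl (by nlinarith [Real.pi_pos])
            (by positivity)
        nlinarith
      have hn := f_nonneg' A (γ 1 1) hA0
      have e : f A 0 = 2 * A := by simp [f]; ring
      rw [hd, e]
      apply Real.sqrt_lt_sqrt
      · positivity
      · simp only [pt, PiLp.sub_apply]
        simp
        exact mul_lt_mul_of_pos_right (by linarith) (by positivity)⟩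
  simpa [Lg] using hlt

/-- There exists `ξ̃` with `0 < ξ̃ < ξ₀` such that
`d_g(u, c) = bε √((1 + ξ̃)² a²/b² + 1)`. -/
theorem exists_xi_tilde (A : ℝ) (hA0 : 0 < A) (hA : A ≤ 3 / 8)
    (ε b : ℝ) (hε0 : 0 < ε) (hε1 : ε ≤ 1) (hb : 0 < b) (hbε : b * ε ≤ 1 / 2) :
    ∃ ξ : ℝ, 0 < ξ ∧ ξ < ξ₀ A ∧
      dg A (pt 0 0 (a * ε)) (pt 0 (b * ε) 0)
        = b * ε * Real.sqrt ((1 + ξ) ^ 2 * a ^ 2 / b ^ 2 + 1) := by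
  have ha : 0 < a := by unfold a; positivity
  set B := b * ε with hBdef
  set H := a * ε with hHdef
  have hB0 : 0 < B := by positivity
  have hH0 : 0 < H := by positivity
  set D := Real.sqrt (B ^ 2 + H ^ 2) with hD
  have hDsq : D ^ 2 = B ^ 2 + H ^ 2 := Real.sq_sqrt (by positivity)
  have hD0 : 0 < D := Real.sqrt_pos.mpr (by positivity)
  have hcq : (B / D) ^ 2 + (H / D) ^ 2 = 1 := by
    field_simp; linarith
  have low := fun γ hγ h0 h1 => Lg_lower A (B / D) (H / D) ((H / D) ^ 2 * A / 8) B H hA0 hA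
    (by positivity) hcq rfl hB0 hbε γ hγ h0 h1
  have hsum : B / D * B + H / D * H = D := by
    field_simp; linarith
  rw [hsum] at low
  obtain ⟨γ, hγ, g0, g1, hup⟩ := line_upper A B H hA0 hB0 hbε hH0
  set d := dg A (pt 0 0 H) (pt 0 B 0) with hd
  have hd1 : D + (H / D) ^ 2 * A / 8 * B ≤ d := by
    refine le_csInf ⟨Lg A γ, γ, hγ, g0, g1, rfl⟩ ?_
    rintro L ⟨γ', hγ', h0, h1, rfl⟩
    exact low γ' hγ' h0 h1
  have hd2 : d ≤ Lg A γ := by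
    refine csInf_le ?_ ⟨γ, hγ, g0, g1, rfl⟩
    refine ⟨D + (H / D) ^ 2 * A / 8 * B, ?_⟩
    rintro L ⟨γ', hγ', h0, h1, rfl⟩
    exact low γ' hγ' h0 h1
  have hDd : D < d := by
    have : 0 < (H / D) ^ 2 * A / 8 * B := by positivity
    linarith
  have hd0 : 0 < d := by linarith
  have hdl : B ^ 2 + H ^ 2 < d ^ 2 := by rw [← hDsq]; nlinarith
  have hdu : d ^ 2 < B ^ 2 + (1 + f A 0) * H ^ 2 :=
    (Real.lt_sqrt hd0.le).1 (lt_of_le_of_lt hd2 hup)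
  have hX : 1 < (d ^ 2 - B ^ 2) / H ^ 2 := by
    rw [lt_div_iff₀ (by positivity)]; linarith
  have hX2 : (d ^ 2 - B ^ 2) / H ^ 2 < 1 + f A 0 := by
    rw [div_lt_iff₀ (by positivity)]; linarith
  refine ⟨Real.sqrt ((d ^ 2 - B ^ 2) / H ^ 2) - 1, ?_, ?_, ?_⟩
  · have := Real.lt_sqrt_of_sq_lt (x := 1) (by simpa using hX)
    linarith
  · have := Real.sqrt_lt_sqrt (by linarith) hX2
    unfold ξ₀; linarith
  · have e : (1 + (Real.sqrt ((d ^ 2 - B ^ 2) / H ^ 2) - 1)) ^ 2 = (d ^ 2 - B ^ 2) / H ^ 2 := by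
      rw [add_sub_cancel, Real.sq_sqrt (by linarith)]
    have e2 : (d ^ 2 - B ^ 2) / H ^ 2 * a ^ 2 / b ^ 2 + 1 = (d / B) ^ 2 := by
      rw [hHdef, hBdef]; field_simp; ring
    rw [e, e2, Real.sqrt_sq (by positivity)]
    field_simp
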